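/- Let d ≥ 1, let b : (0,1) × ℝ^d → ℝ^d be continuously differentiable, let ρ : (0,1) × ℝ^d → ℝ be continuously differentiable, strictly positive, and satisfy the continuity equation ∂_t ρ(t,x) + ∇·(b(t,·) ρ(t,·))(x) = 0 for all t, x. Let r : (0,1) × ℝ^d → ℝ be such that x ↦ r(t,x) is twice continuously differentiable and (t,x) ↦ r(t,x) is continuously differentiable, let F : (0,1) → ℝ be differentiable, let χ : (0,1) → ℝ, and define s(t,x) = ∇_x (log ρ(t,·))(x), the tilted density ρ̂(t,x) = ρ(t,x) · exp(r(t,x) + F(t)), and the modified drift b̃(t,x) = b(t,x) + χ(t) · ∇_x r(t,·)(x). Then for all t ∈ (0,1) and x ∈ ℝ^d: ∂_t ρ̂(t,x) + ∇·(b̃(t,·) ρ̂(t,·))(x) = (⟪b(t,x), ∇_x r(t,·)(x)⟫ + ∂_t r(t,x) + χ(t) · (‖∇_x r(t,·)(x)‖² + Δ_x r(t,·)(x) + ⟪∇_x r(t,·)(x), s(t,x)⟫) + F'(t)) · ρ̂(t,x). -/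

import Mathlib

open Set
open scoped RealInnerProductSpace

noncomputable section

/-- Divergence of a vector field: the trace of its Fréchet derivative. -/
def div' {d : ℕ} (v : EuclideanSpace ℝ (Fin d) → EuclideanSpace ℝ (Fin d))
    (x : EuclideanSpace ℝ (Fin d)) : ℝ :=
  LinearMap.trace ℝ (EuclideanSpace ℝ (Fin d)) (fderiv ℝ v x).toLinearMap

/-- Laplacian of a scalar function: the divergence of its gradient. -/
def lap {d : ℕ} (f : EuclideanSpace ℝ (Fin d) → ℝ) (x : EuclideanSpace ℝ (Fin d)) : ℝ :=
  div' (fun y => gradient f y) x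

theorem div_smul_aux {d : ℕ} {f : EuclideanSpace ℝ (Fin d) → ℝ}
    {v : EuclideanSpace ℝ (Fin d) → EuclideanSpace ℝ (Fin d)} {x : EuclideanSpace ℝ (Fin d)}
    (hf : DifferentiableAt ℝ f x) (hv : DifferentiableAt ℝ v x) :
    div' (fun y => f y • v y) x = f x * div' v x + fderiv ℝ f x (v x) := by
  unfold div'
  have h0 : fderiv ℝ (fun y => f y • v y) x
      = f x • fderiv ℝ v x + (fderiv ℝ f x).smulRight (v x) :=
    (hf.hasFDerivAt.smul hv.hasFDerivAt).fderiv
  rw [h0]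
  have h : (f x • fderiv ℝ v x + (fderiv ℝ f x).smulRight (v x)).toLinearMap
      = f x • (fderiv ℝ v x).toLinearMap
        + (fderiv ℝ f x).toLinearMap.smulRight (v x) := by
    ext; simp
  rw [h, map_add, map_smul, LinearMap.trace_smulRight]
  simp

theorem div_add_smul_aux {d : ℕ} (c : ℝ)
    {u v : EuclideanSpace ℝ (Fin d) → EuclideanSpace ℝ (Fin d)} {x : EuclideanSpace ℝ (Fin d)}
    (hu : DifferentiableAt ℝ u x) (hv : DifferentiableAt ℝ v x) :
    div' (fun y => u y + c • v y) x = div' u x + c * div' v x := by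
  unfold div'
  have h0 : fderiv ℝ (fun y => u y + c • v y) x = fderiv ℝ u x + c • fderiv ℝ v x :=
    (hu.hasFDerivAt.add (hv.hasFDerivAt.const_smul c)).fderiv
  rw [h0]
  have h : (fderiv ℝ u x + c • fderiv ℝ v x).toLinearMap
      = (fderiv ℝ u x).toLinearMap + c • (fderiv ℝ v x).toLinearMap := by
    ext; simp
  rw [h, map_add, map_smul]
  simp

theorem inner_gradient_aux {d : ℕ} (f : EuclideanSpace ℝ (Fin d) → ℝ)
    (x v : EuclideanSpace ℝ (Fin d)) : ⟪v, gradient f x⟫ = fderiv ℝ f x v := by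
  rw [real_inner_comm, gradient, InnerProductSpace.toDual_symm_apply]

theorem tilted_continuity_equation_modified_drift
    (d : ℕ) (hd : 1 ≤ d)
    (b : ℝ → EuclideanSpace ℝ (Fin d) → EuclideanSpace ℝ (Fin d))
    (ρ r : ℝ → EuclideanSpace ℝ (Fin d) → ℝ)
    (F χ : ℝ → ℝ)
    (s btilde : ℝ → EuclideanSpace ℝ (Fin d) → EuclideanSpace ℝ (Fin d))
    (ρhat : ℝ → EuclideanSpace ℝ (Fin d) → ℝ)
    (hb : ContDiffOn ℝ 1 (fun p : ℝ × EuclideanSpace ℝ (Fin d) => b p.1 p.2)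
      (Ioo (0:ℝ) 1 ×ˢ univ))
    (hρ : ContDiffOn ℝ 1 (fun p : ℝ × EuclideanSpace ℝ (Fin d) => ρ p.1 p.2)
      (Ioo (0:ℝ) 1 ×ˢ univ))
    (hρpos : ∀ t ∈ Ioo (0:ℝ) 1, ∀ x, 0 < ρ t x)
    (hce : ∀ t ∈ Ioo (0:ℝ) 1, ∀ x,
      deriv (fun τ => ρ τ x) t + div' (fun y => ρ t y • b t y) x = 0)
    (hrx : ∀ t ∈ Ioo (0:ℝ) 1, ContDiff ℝ 2 (r t))
    (hr : ContDiffOn ℝ 1 (fun p : ℝ × EuclideanSpace ℝ (Fin d) => r p.1 p.2)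
      (Ioo (0:ℝ) 1 ×ˢ univ))
    (hF : DifferentiableOn ℝ F (Ioo (0:ℝ) 1))
    (hs : ∀ t x, s t x = gradient (fun y => Real.log (ρ t y)) x)
    (hρhat : ∀ t x, ρhat t x = ρ t x * Real.exp (r t x + F t))
    (hbtilde : ∀ t x, btilde t x = b t x + χ t • gradient (r t) x) :
    ∀ t ∈ Ioo (0:ℝ) 1, ∀ x,
      deriv (fun τ => ρhat τ x) t + div' (fun y => ρhat t y • btilde t y) x =
        (⟪b t x, gradient (r t) x⟫ + deriv (fun τ => r τ x) t
          + χ t * (‖gradient (r t) x‖ ^ 2 + lap (r t) x + ⟪gradient (r t) x, s t x⟫)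
          + deriv F t) * ρhat t x := by
  intro t ht x
  have hn : Ioo (0:ℝ) 1 ×ˢ (univ : Set (EuclideanSpace ℝ (Fin d))) ∈ nhds (t, x) :=
    prod_mem_nhds (isOpen_Ioo.mem_nhds ht) Filter.univ_mem
  have hbp := (hb.contDiffAt hn).differentiableAt one_ne_zero
  have hρp := (hρ.contDiffAt hn).differentiableAt one_ne_zero
  have hrp := (hr.contDiffAt hn).differentiableAt one_ne_zero
  have hix : DifferentiableAt ℝ (fun y : EuclideanSpace ℝ (Fin d) => (t, y)) x := by fun_prop
  have hit : DifferentiableAt ℝ (fun τ : ℝ => (τ, x)) t := by fun_prop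
  have hbx : DifferentiableAt ℝ (b t) x := hbp.comp x hix
  have hρx : DifferentiableAt ℝ (ρ t) x := hρp.comp x hix
  have hrx1 : DifferentiableAt ℝ (r t) x := hrp.comp x hix
  have hρt : DifferentiableAt ℝ (fun τ => ρ τ x) t :=
    DifferentiableAt.comp (g := fun p : ℝ × EuclideanSpace ℝ (Fin d) => ρ p.1 p.2) t hρp hit
  have hrt : DifferentiableAt ℝ (fun τ => r τ x) t :=
    DifferentiableAt.comp (g := fun p : ℝ × EuclideanSpace ℝ (Fin d) => r p.1 p.2) t hrp hit
  have hFt : DifferentiableAt ℝ F t := hF.differentiableAt (isOpen_Ioo.mem_nhds ht)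
  have hg : DifferentiableAt ℝ (fun y => gradient (r t) y) x := by
    have h1 : DifferentiableAt ℝ (fderiv ℝ (r t)) x :=
      (((hrx t ht).fderiv_right (m := 1) (by norm_num)).differentiable one_ne_zero) x
    exact ((InnerProductSpace.toDual ℝ
      (EuclideanSpace ℝ (Fin d))).symm.toContinuousLinearEquiv.differentiableAt).comp x h1
  have hρ0 : ρ t x ≠ 0 := (hρpos t ht x).ne'
  have hce' := hce t ht x
  rw [div_smul_aux hρx hbx] at hce'
  have e1 : (fun τ => ρhat τ x) = fun τ => ρ τ x * Real.exp (r τ x + F τ) := by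
    funext τ; exact hρhat τ x
  have e2 : ρhat t = fun y => ρ t y * Real.exp (r t y + F t) := by
    funext y; exact hρhat t y
  have e3 : btilde t = fun y => b t y + χ t • gradient (r t) y := by
    funext y; exact hbtilde t y
  have d1 : deriv (fun τ => ρhat τ x) t = deriv (fun τ => ρ τ x) t * Real.exp (r t x + F t)
      + ρ t x * (Real.exp (r t x + F t) * (deriv (fun τ => r τ x) t + deriv F t)) := by
    rw [e1]
    exact (hρt.hasDerivAt.mul (hrt.hasDerivAt.add hFt.hasDerivAt).exp).deriv
  have h2 : HasFDerivAt (ρhat t) (ρ t x • (Real.exp (r t x + F t) • fderiv ℝ (r t) x)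
      + Real.exp (r t x + F t) • fderiv ℝ (ρ t) x) x := by
    rw [e2]
    exact hρx.hasFDerivAt.mul (hrx1.hasFDerivAt.add_const (F t)).exp
  have hbt : DifferentiableAt ℝ (btilde t) x := by
    rw [e3]; exact hbx.add (hg.const_smul (χ t))
  have d3 : div' (btilde t) x = div' (b t) x + χ t * lap (r t) x := by
    rw [e3]; exact div_add_smul_aux (χ t) hbx hg
  have d4 : ⟪gradient (r t) x, s t x⟫ = (ρ t x)⁻¹ * fderiv ℝ (ρ t) x (gradient (r t) x) := by
    rw [hs, inner_gradient_aux, (hρx.hasFDerivAt.log hρ0).fderiv]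
    simp
  rw [d1, div_smul_aux h2.differentiableAt hbt, h2.fderiv, d3, d4, ← real_inner_self_eq_norm_sq,
    inner_gradient_aux, inner_gradient_aux, hbtilde, hρhat]
  simp only [add_apply, smul_apply, smul_eq_mul, map_add,
    map_smul]
  have hdt : deriv (fun τ => ρ τ x) t
      = -(ρ t x * div' (b t) x + fderiv ℝ (ρ t) x (b t x)) := by linarith
  rw [hdt]
  field_simp
  ring
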